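/- Let q > 1, M ≥ 1, and let f : [0,1) → (0,∞) be non-decreasing and satisfy, for every subinterval (a,b) ⊆ [0,1), the inequality ((1/(b−a)) ∫_a^b f(y) dy) · ((1/(b−a)) ∫_a^b f(y)^{-1/(q-1)} dy)^{q-1} ≤ M. Let p_0 ∈ [1,q] be the root of ((q−p_0)/(q−1))·(M·p_0)^{1/(q-1)} = 1. Then for every p ∈ (p_0, q] there exists a constant M' = M'(p,q,M) > 0 such that for every subinterval (a,b) ⊆ [0,1): ((1/(b−a)) ∫_a^b f(y) dy) · ((1/(b−a)) ∫_a^b f(y)^{-1/(p-1)} dy)^{p-1} ≤ M'; in particular f^{-1/(p-1)} is integrable on (0,1). -/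

import Mathlib

open MeasureTheory Set

lemma aux_amgm {x y r : ℝ} (hx : 0 < x) (hy : 0 < y) (hr : 0 < r) (h : 1 ≤ x * y ^ r) :
    1 + r ≤ x + r * y := by
  have h1 := Real.log_nonneg h
  have hyr : 0 < y ^ r := Real.rpow_pos_of_pos hy r
  rw [Real.log_mul hx.ne' hyr.ne', Real.log_rpow hy] at h1
  have h2 := Real.log_le_sub_one_of_pos hx
  have h3 := mul_le_mul_of_nonneg_left (Real.log_le_sub_one_of_pos hy) hr.le
  linarith

lemma aux_const {r M p₀ p₁ : ℝ} (hr : 0 < r) (hM : 1 ≤ M) (h1 : 1 ≤ p₀) (h2 : p₀ < p₁)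
    (h3 : p₁ < r + 1) (he : ((r + 1 - p₀) / r) * (M * p₀) ^ (1 / r) = 1) :
    M * p₁ * ((r + 1 - p₁) / r) ^ r ≤ 1 := by
  have hv0 : 0 < (r + 1 - p₀) / r := div_pos (by linarith) hr
  have hv1 : 0 < (r + 1 - p₁) / r := div_pos (by linarith) hr
  have hM0 : 0 < M := by linarith
  have hp0 : 0 < p₀ := by linarith
  have hp1 : 0 < p₁ := by linarith
  have hl := congrArg Real.log he
  rw [Real.log_mul hv0.ne' (by positivity), Real.log_rpow (by positivity),
    Real.log_mul hM0.ne' hp0.ne', Real.log_one] at hl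
  have hl' : r * Real.log ((r + 1 - p₀) / r) + (Real.log M + Real.log p₀) = 0 := by
    have := congrArg (fun z => r * z) hl
    simp only [mul_add, mul_zero] at this
    have e : r * (1 / r * Real.log M) = Real.log M := by field_simp
    have e' : r * (1 / r * Real.log p₀) = Real.log p₀ := by field_simp
    linarith
  have hpos : 0 < M * p₁ * ((r + 1 - p₁) / r) ^ r := by positivity
  rw [← Real.log_nonpos_iff hpos.le, Real.log_mul (by positivity) (by positivity),
    Real.log_mul hM0.ne' hp1.ne', Real.log_rpow hv1]
  have a1 := Real.log_le_sub_one_of_pos (div_pos hp1 hp0)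
  have a2 := Real.log_le_sub_one_of_pos (div_pos hv1 hv0)
  rw [Real.log_div hp1.ne' hp0.ne'] at a1
  rw [Real.log_div hv1.ne' hv0.ne'] at a2
  have a3 := mul_le_mul_of_nonneg_left a2 hr.le
  have hd : 0 < r + 1 - p₀ := by linarith
  have e1 : p₁ / p₀ - 1 = (p₁ - p₀) / p₀ := by field_simp
  have e2 : r * (((r + 1 - p₁) / r) / ((r + 1 - p₀) / r) - 1) = - (r * (p₁ - p₀) / (r + 1 - p₀)) := by
    field_simp; ring
  have e3 : (p₁ - p₀) / p₀ ≤ r * (p₁ - p₀) / (r + 1 - p₀) := by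
    rw [div_le_div_iff₀ hp0 hd]
    nlinarith [mul_nonneg (sub_nonneg.2 h2.le) (mul_nonneg (by linarith : (0:ℝ) ≤ r+1) (sub_nonneg.2 h1))]
  rw [e2] at a3
  rw [e1] at a1
  nlinarith

lemma aux_int_neg {f : ℝ → ℝ} (hf : Measurable f) (hm : MonotoneOn f (Ico 0 1))
    (hpos : ∀ x ∈ Ico (0 : ℝ) 1, 0 < f x) {s : ℝ} (hs : 0 ≤ s) :
    IntegrableOn (fun y => f y ^ (-s)) (Ioo 0 1) := by
  refine Measure.integrableOn_of_bounded (M := f 0 ^ (-s)) (by simp)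
    (hf.pow_const _).aestronglyMeasurable ?_
  filter_upwards [ae_restrict_mem measurableSet_Ioo] with y hy
  have h0 := hpos 0 (by simp)
  have hy' : y ∈ Ico (0:ℝ) 1 := ⟨hy.1.le, hy.2⟩
  rw [Real.norm_of_nonneg (Real.rpow_nonneg (hpos y hy').le _)]
  exact Real.rpow_le_rpow_of_nonpos h0 (hm (by simp) hy' hy.1.le) (by linarith)

lemma aux_ii {f : ℝ → ℝ} (h : IntegrableOn f (Ioo 0 1)) {a b : ℝ} (ha : 0 ≤ a) (hab : a ≤ b)
    (hb : b ≤ 1) : IntervalIntegrable f volume a b := by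
  rw [intervalIntegrable_iff_integrableOn_Ioo_of_le hab]
  exact h.mono_set (Ioo_subset_Ioo ha hb)

lemma aux_int_f {r M : ℝ} (hr : 0 < r) {f : ℝ → ℝ} (hf : Measurable f)
    (hm : MonotoneOn f (Ico 0 1)) (hpos : ∀ x ∈ Ico (0 : ℝ) 1, 0 < f x)
    (hA : ∀ a b : ℝ, 0 ≤ a → a < b → b ≤ 1 →
        ((1 / (b - a)) * ∫ y in a..b, f y) *
          ((1 / (b - a)) * ∫ y in a..b, f y ^ (-(1 / r))) ^ r ≤ M) :
    IntegrableOn f (Ioo 0 1) := by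
  have hg := aux_int_neg hf hm hpos (s := 1 / r) (by positivity)
  have hi : ∀ b, 0 ≤ b → b < 1 → IntervalIntegrable f volume 0 b := by
    intro b hb0 hb
    apply MonotoneOn.intervalIntegrable
    rw [uIcc_of_le hb0]
    exact hm.mono (fun x hx => ⟨hx.1, hx.2.trans_lt hb⟩)
  set m := f (1/2) ^ (-(1 / r)) with hmdef
  have hhalf : (1/2 : ℝ) ∈ Ico (0:ℝ) 1 := by constructor <;> norm_num
  have hm0 : 0 < m := Real.rpow_pos_of_pos (hpos _ hhalf) _
  have hbd : ∀ b, 1/2 ≤ b → b < 1 → ∫ y in (0:ℝ)..b, f y ≤ M / (m / 2) ^ r := by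
    intro b hb hb1
    have hb0 : 0 < b := by linarith
    have h := hA 0 b le_rfl hb0 hb1.le
    have hF0 : 0 ≤ ∫ y in (0:ℝ)..b, f y :=
      intervalIntegral.integral_nonneg_of_ae_restrict hb0.le (by
        filter_upwards [ae_restrict_mem measurableSet_Icc] with y hy
        exact (hpos y ⟨hy.1, hy.2.trans_lt hb1⟩).le)
    have hG : m / 2 ≤ ∫ y in (0:ℝ)..b, f y ^ (-(1 / r)) := by
      have e := intervalIntegral.integral_add_adjacent_intervals
        (aux_ii hg le_rfl (by norm_num : (0:ℝ) ≤ 1/2) (by norm_num))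
        (aux_ii hg (by norm_num : (0:ℝ) ≤ 1/2) hb hb1.le)
      have e1 : ∫ y in (0:ℝ)..(1/2), m ≤ ∫ y in (0:ℝ)..(1/2), f y ^ (-(1 / r)) := by
        apply intervalIntegral.integral_mono_on_of_le_Ioo (by norm_num) (by simp)
          (aux_ii hg le_rfl (by norm_num : (0:ℝ) ≤ 1/2) (by norm_num))
        intro x hx
        have hx' : x ∈ Ico (0:ℝ) 1 := ⟨hx.1.le, by linarith [hx.2]⟩
        exact Real.rpow_le_rpow_of_nonpos (hpos x hx') (hm hx' hhalf hx.2.le)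
          (by have : 0 < 1 / r := by positivity
              linarith)
      have e2 : 0 ≤ ∫ y in (1/2:ℝ)..b, f y ^ (-(1 / r)) :=
        intervalIntegral.integral_nonneg_of_ae_restrict hb (by
          filter_upwards [ae_restrict_mem measurableSet_Icc] with y hy
          exact Real.rpow_nonneg (hpos y ⟨by linarith [hy.1], hy.2.trans_lt hb1⟩).le _)
      rw [intervalIntegral.integral_const] at e1
      simp only [smul_eq_mul] at e1
      linarith
    have hb' : 1 ≤ 1 / (b - 0) := by
      rw [le_div_iff₀ (by linarith)]; linarith
    rw [le_div_iff₀ (by positivity)]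
    refine le_trans ?_ h
    gcongr
    · nlinarith
    · nlinarith
  have hIoc : IntegrableOn f (Ioc 0 1) := by
    have ht' : Filter.Tendsto (fun n : ℕ => 1 - 1 / ((n:ℝ) + 2)) Filter.atTop (nhds 1) := by
      have h1 := (tendsto_one_div_add_atTop_nhds_zero_nat (𝕜 := ℝ)).comp (Filter.tendsto_add_atTop_nat 1)
      have h2 := h1.const_sub 1
      simp only [sub_zero] at h2
      refine h2.congr (fun n => ?_)
      simp only [Function.comp]
      push_cast
      ring
    have hb : ∀ n : ℕ, 1/2 ≤ 1 - 1 / ((n:ℝ) + 2) ∧ 1 - 1 / ((n:ℝ) + 2) < 1 := by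
      intro n
      have hn : (0:ℝ) < (n:ℝ) + 2 := by positivity
      have : 1 / ((n:ℝ) + 2) ≤ 1 / 2 := by
        apply one_div_le_one_div_of_le (by norm_num)
        have : (0:ℝ) ≤ n := by positivity
        linarith
      have : 0 < 1 / ((n:ℝ) + 2) := by positivity
      constructor <;> linarith
    refine integrableOn_Ioc_of_intervalIntegral_norm_bounded_right (I := M / (m / 2) ^ r)
      (fun n => ?_) ht' (Filter.Eventually.of_forall fun n => ?_)
    · have := hi _ (by linarith [(hb n).1]) (hb n).2
      exact (intervalIntegrable_iff_integrableOn_Ioc_of_le (by linarith [(hb n).1])).1 this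
    · refine le_trans (le_of_eq ?_) (hbd _ (hb n).1 (hb n).2)
      rw [intervalIntegral.integral_of_le (by linarith [(hb n).1])]
      apply setIntegral_congr_fun measurableSet_Ioc
      intro x hx
      exact Real.norm_of_nonneg (hpos x ⟨hx.1.le, hx.2.trans_lt (hb n).2⟩).le
  exact hIoc.mono_set Ioo_subset_Ioc_self

lemma aux_jensen {r : ℝ} (hr : 0 < r) {f : ℝ → ℝ} {a s : ℝ} (has : a < s)
    (hpos : ∀ x ∈ Ioo a s, 0 < f x) (hf : IntervalIntegrable f volume a s)
    (hg : IntervalIntegrable (fun y => f y ^ (-(1 / r))) volume a s) :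
    1 ≤ ((1 / (s - a)) * ∫ y in a..s, f y) *
          ((1 / (s - a)) * ∫ y in a..s, f y ^ (-(1 / r))) ^ r := by
  have hτ : 0 < s - a := by linarith
  have hF : 0 < ∫ y in a..s, f y := intervalIntegral.intervalIntegral_pos_of_pos_on hf hpos has
  have hG : 0 < ∫ y in a..s, f y ^ (-(1 / r)) :=
    intervalIntegral.intervalIntegral_pos_of_pos_on hg
      (fun x hx => Real.rpow_pos_of_pos (hpos x hx) _) has
  set A := (1 / (s - a)) * ∫ y in a..s, f y with hA
  set B := (1 / (s - a)) * ∫ y in a..s, f y ^ (-(1 / r)) with hB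
  have hA0 : 0 < A := by positivity
  have hB0 : 0 < B := by positivity
  have hFA : ∫ y in a..s, f y = (s - a) * A := by rw [hA]; field_simp
  have hGB : ∫ y in a..s, f y ^ (-(1 / r)) = (s - a) * B := by rw [hB]; field_simp
  by_contra! hlt
  -- logarithmic tangent inequality
  have hlog : Real.log A + r * Real.log B < 0 := by
    have h1 := Real.log_neg (by positivity) hlt
    rwa [Real.log_mul hA0.ne' (by positivity), Real.log_rpow hB0] at h1
  have key : ∫ y in a..s, (1 + r - (Real.log A + r * Real.log B)) ≤
      ∫ y in a..s, (A⁻¹ * f y + r * B⁻¹ * f y ^ (-(1 / r))) := by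
    apply intervalIntegral.integral_mono_on_of_le_Ioo has.le (by simp)
      ((hf.const_mul _).add (hg.const_mul _))
    intro x hx
    have hx0 := hpos x hx
    have hgx : 0 < f x ^ (-(1 / r)) := Real.rpow_pos_of_pos hx0 _
    have h1 := Real.log_le_sub_one_of_pos (div_pos hx0 hA0)
    have h2 := Real.log_le_sub_one_of_pos (div_pos hgx hB0)
    rw [Real.log_div hx0.ne' hA0.ne'] at h1
    rw [Real.log_div hgx.ne' hB0.ne', Real.log_rpow hx0] at h2
    have h3 := mul_le_mul_of_nonneg_left h2 hr.le
    have e1 : r * (-(1 / r) * Real.log (f x) - Real.log B) = - Real.log (f x) - r * Real.log B := by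
      field_simp
    have e2 : r * (f x ^ (-(1 / r)) / B - 1) = r * B⁻¹ * f x ^ (-(1 / r)) - r := by
      field_simp
    have e3 : f x / A = A⁻¹ * f x := by field_simp
    rw [e1, e2] at h3
    rw [e3] at h1
    linarith
  rw [intervalIntegral.integral_add (hf.const_mul _) (hg.const_mul _),
    intervalIntegral.integral_const_mul, intervalIntegral.integral_const_mul, hFA, hGB,
    intervalIntegral.integral_const] at key
  have e4 : A⁻¹ * ((s - a) * A) + r * B⁻¹ * ((s - a) * B) = (s - a) * (1 + r) := by
    field_simp
  rw [e4, smul_eq_mul] at key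
  have := le_of_mul_le_mul_left key hτ
  linarith

lemma aux_key {r M p₁ v₁ : ℝ} (hr : 0 < r) (hp1 : 0 < p₁) (hv1 : 0 < v₁)
    (hM : 0 < M) (hc : M * p₁ * v₁ ^ r ≤ 1) {f : ℝ → ℝ} (hf : Measurable f)
    (hm : MonotoneOn f (Ico 0 1)) (hpos : ∀ x ∈ Ico (0 : ℝ) 1, 0 < f x)
    (hA : ∀ a b : ℝ, 0 ≤ a → a < b → b ≤ 1 →
        ((1 / (b - a)) * ∫ y in a..b, f y) *
          ((1 / (b - a)) * ∫ y in a..b, f y ^ (-(1 / r))) ^ r ≤ M)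
    {a s b : ℝ} (ha : 0 ≤ a) (has : a < s) (hsb : s < b) (hb : b ≤ 1) :
    Real.log (∫ y in a..s, f y) + r * p₁ / v₁ * Real.log (∫ y in a..s, f y ^ (-(1 / r)))
        - p₁ * (r + 1) * Real.log (s - a) ≤
    Real.log (∫ y in a..b, f y) + r * p₁ / v₁ * Real.log (∫ y in a..b, f y ^ (-(1 / r)))
        - p₁ * (r + 1) * Real.log (b - a) := by
  have hg := aux_int_neg hf hm hpos (s := 1 / r) (by positivity)
  have hfi := aux_int_f hr hf hm hpos hA
  have hFpos : ∀ t, a < t → t ≤ 1 → 0 < ∫ y in a..t, f y := fun t h1 h2 =>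
    intervalIntegral.intervalIntegral_pos_of_pos_on (aux_ii hfi ha h1.le h2)
      (fun x hx => hpos x ⟨by linarith [hx.1], by linarith [hx.2]⟩) h1
  have hGpos : ∀ t, a < t → t ≤ 1 → 0 < ∫ y in a..t, f y ^ (-(1 / r)) := fun t h1 h2 =>
    intervalIntegral.intervalIntegral_pos_of_pos_on (aux_ii hg ha h1.le h2)
      (fun x hx => Real.rpow_pos_of_pos (hpos x ⟨by linarith [hx.1], by linarith [hx.2]⟩) _) h1
  have hlim : ∀ x ∈ Ico s b, ∃ l, 0 < l ∧ Filter.Tendsto f (nhdsWithin x (Ioi x)) (nhds l) := by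
    intro x hx
    have hx1 : x < 1 := hx.2.trans_le hb
    have hx0 : 0 ≤ x := by linarith [hx.1]
    have hlow : ∀ z ∈ f '' Ioo x 1, f x ≤ z := by
      rintro _ ⟨y, hy, rfl⟩
      exact hm ⟨hx0, hx1⟩ ⟨hx0.trans hy.1.le, hy.2⟩ hy.1.le
    refine ⟨_, ?_, MonotoneOn.tendsto_nhdsWithin_Ioo_right (y := 1) (nonempty_Ioo.2 hx1)
      (hm.mono fun y hy => ⟨hx0.trans hy.1.le, hy.2⟩) ⟨f x, hlow⟩⟩
    exact (hpos x ⟨hx0, hx1⟩).trans_le (le_csInf ((nonempty_Ioo.2 hx1).image f) hlow)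
  choose! l hl0 hl using hlim
  have hcont : ∀ {h : ℝ → ℝ}, IntegrableOn h (Ioo 0 1) →
      ContinuousOn (fun x => ∫ y in a..x, h y) (Icc s b) := by
    intro h hh
    have h1 : IntegrableOn h (uIcc a b) := by
      rw [uIcc_of_le (has.trans hsb).le, integrableOn_Icc_iff_integrableOn_Ioo]
      exact hh.mono_set (Ioo_subset_Ioo ha hb)
    have h2 := intervalIntegral.continuousOn_primitive_interval h1
    rw [uIcc_of_le (has.trans hsb).le] at h2
    exact h2.mono (Icc_subset_Icc_left has.le)
  have main := image_le_of_deriv_right_le_deriv_boundary (a := s) (b := b)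
    (f := fun x => -(Real.log (∫ y in a..x, f y) + r * p₁ / v₁ * Real.log (∫ y in a..x, f y ^ (-(1 / r)))
        - p₁ * (r + 1) * Real.log (x - a)))
    (f' := fun x => -(l x / (∫ y in a..x, f y) + r * p₁ / v₁ * (l x ^ (-(1 / r)) / (∫ y in a..x, f y ^ (-(1 / r))))
        - p₁ * (r + 1) * (1 / (x - a))))
    (B := fun _ => -(Real.log (∫ y in a..s, f y) + r * p₁ / v₁ * Real.log (∫ y in a..s, f y ^ (-(1 / r)))
        - p₁ * (r + 1) * Real.log (s - a))) (B' := fun _ => 0)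
    ?_ ?_ le_rfl continuousOn_const (fun x _ => hasDerivWithinAt_const _ _ _) ?_
    (right_mem_Icc.2 hsb.le)
  · exact neg_le_neg_iff.1 main
  · apply ContinuousOn.neg
    apply ContinuousOn.sub
    · apply ContinuousOn.add
      · exact (hcont hfi).log fun x hx => (hFpos x (has.trans_le hx.1) (hx.2.trans hb)).ne'
      · exact continuousOn_const.mul
          ((hcont hg).log fun x hx => (hGpos x (has.trans_le hx.1) (hx.2.trans hb)).ne')
    · apply continuousOn_const.mul
      apply ContinuousOn.log (by fun_prop)
      intro x hx
      have := hx.1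
      linarith
  · intro x hx
    have hax : a < x := has.trans_le hx.1
    have hx1 : x ≤ 1 := hx.2.le.trans hb
    have dF : HasDerivWithinAt (fun u => ∫ y in a..u, f y) (l x) (Ici x) x :=
      intervalIntegral.integral_hasDerivWithinAt_of_tendsto_ae_right (t := Ioi x)
        (aux_ii hfi ha hax.le hx1)
        hf.stronglyMeasurable.stronglyMeasurableAtFilter
        ((hl x hx).mono_left inf_le_left)
    have dG : HasDerivWithinAt (fun u => ∫ y in a..u, f y ^ (-(1 / r))) (l x ^ (-(1 / r))) (Ici x) x :=
      intervalIntegral.integral_hasDerivWithinAt_of_tendsto_ae_right (t := Ioi x)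
        (aux_ii hg ha hax.le hx1)
        (hf.pow_const _).stronglyMeasurable.stronglyMeasurableAtFilter
        (((hl x hx).rpow_const (Or.inl (hl0 x hx).ne')).mono_left inf_le_left)
    have dT : HasDerivWithinAt (fun u : ℝ => u - a) 1 (Ici x) x :=
      (hasDerivWithinAt_id x _).sub_const a
    exact (((dF.log (hFpos x hax hx1).ne').add ((dG.log (hGpos x hax hx1).ne').const_mul _)).sub
      ((dT.log (by linarith)).const_mul _)).neg
  · intro x hx
    have hax : a < x := has.trans_le hx.1
    have hx1 : x ≤ 1 := hx.2.le.trans hb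
    have hτ : 0 < x - a := by linarith
    have hF := hFpos x hax hx1
    have hG := hGpos x hax hx1
    have hAx := hA a x ha hax hx1
    have hlx := hl0 x hx
    set F := ∫ y in a..x, f y
    set G := ∫ y in a..x, f y ^ (-(1 / r))
    set L := l x
    have hLr : 0 < L ^ (-(1 / r)) := Real.rpow_pos_of_pos hlx _
    have h1 := aux_amgm (x := (x - a) * L / F / p₁) (y := (x - a) * L ^ (-(1 / r)) / G / v₁)
      (by positivity) (by positivity) hr (by
        have e : ((x - a) * L ^ (-(1 / r)) / G / v₁) ^ r
            = L⁻¹ / ((1 / (x - a) * G) ^ r * v₁ ^ r) := by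
          have : (x - a) * L ^ (-(1 / r)) / G / v₁ = L ^ (-(1 / r)) / ((1 / (x - a) * G) * v₁) := by
            field_simp
          rw [this, Real.div_rpow hLr.le (by positivity), Real.mul_rpow (by positivity) hv1.le,
            ← Real.rpow_mul hlx.le]
          have : -(1 / r) * r = -1 := by field_simp
          rw [this, Real.rpow_neg_one]
        rw [e]
        have hGr : 0 < (1 / (x - a) * G) ^ r := by positivity
        have hvr : 0 < v₁ ^ r := by positivity
        have e2 : (x - a) * L / F / p₁ * (L⁻¹ / ((1 / (x - a) * G) ^ r * v₁ ^ r))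
           = 1 / ((1 / (x - a) * F * (1 / (x - a) * G) ^ r) * (p₁ * v₁ ^ r)) := by
          generalize (1 / (x - a) * G) ^ r = W at *
          field_simp
        rw [e2, le_div_iff₀ (by positivity), one_mul]
        calc _ ≤ M * (p₁ * v₁ ^ r) := by gcongr
          _ ≤ 1 := by linarith)
    have h2 : L / F + r * p₁ / v₁ * (L ^ (-(1 / r)) / G) - p₁ * (r + 1) * (1 / (x - a))
        = p₁ / (x - a) * (((x - a) * L / F / p₁ + r * ((x - a) * L ^ (-(1 / r)) / G / v₁)) - (1 + r)) := by
      field_simp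
      ring
    rw [h2]
    have : 0 ≤ p₁ / (x - a) * (((x - a) * L / F / p₁ + r * ((x - a) * L ^ (-(1 / r)) / G / v₁)) - (1 + r)) :=
      mul_nonneg (by positivity) (by linarith)
    linarith

lemma aux_pointwise {r M p₁ : ℝ} (hr : 0 < r) (hp1 : 1 < p₁) (hpr : p₁ < r + 1)
    (hM : 0 < M) (hc : M * p₁ * ((r + 1 - p₁) / r) ^ r ≤ 1) {f : ℝ → ℝ} (hf : Measurable f)
    (hm : MonotoneOn f (Ico 0 1)) (hpos : ∀ x ∈ Ico (0 : ℝ) 1, 0 < f x)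
    (hA : ∀ a b : ℝ, 0 ≤ a → a < b → b ≤ 1 →
        ((1 / (b - a)) * ∫ y in a..b, f y) *
          ((1 / (b - a)) * ∫ y in a..b, f y ^ (-(1 / r))) ^ r ≤ M)
    {a s b : ℝ} (ha : 0 ≤ a) (has : a < s) (hsb : s < b) (hb : b ≤ 1) :
    -(1 / r) * Real.log (f s) ≤
      Real.log M / (r * p₁ / ((r + 1 - p₁) / r) - r)
      + Real.log ((1 / (b - a)) * ∫ y in a..b, f y ^ (-(1 / r)))
      + (p₁ - 1) / r * (Real.log (b - a) - Real.log (s - a)) := by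
  have hg := aux_int_neg hf hm hpos (s := 1 / r) (by positivity)
  have hfi := aux_int_f hr hf hm hpos hA
  have hFpos : ∀ t, a < t → t ≤ 1 → 0 < ∫ y in a..t, f y := fun t h1 h2 =>
    intervalIntegral.intervalIntegral_pos_of_pos_on (aux_ii hfi ha h1.le h2)
      (fun x hx => hpos x ⟨by linarith [hx.1], by linarith [hx.2]⟩) h1
  have hGpos : ∀ t, a < t → t ≤ 1 → 0 < ∫ y in a..t, f y ^ (-(1 / r)) := fun t h1 h2 =>
    intervalIntegral.intervalIntegral_pos_of_pos_on (aux_ii hg ha h1.le h2)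
      (fun x hx => Real.rpow_pos_of_pos (hpos x ⟨by linarith [hx.1], by linarith [hx.2]⟩) _) h1
  have hs1 : s < 1 := hsb.trans_le hb
  have hab := has.trans hsb
  have hv : 0 < (r + 1 - p₁) / r := div_pos (by linarith) hr
  have key := aux_key hr (by linarith) hv hM hc hf hm hpos hA ha has hsb hb
  have hAb := hA a b ha hab hb
  have hJ := aux_jensen hr has (fun x hx => hpos x ⟨by linarith [hx.1], by linarith [hx.2]⟩)
    (aux_ii hfi ha has.le hs1.le) (aux_ii hg ha has.le hs1.le)
  have hτ : 0 < s - a := by linarith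
  have hT : 0 < b - a := by linarith
  have hss : s ∈ Ico (0:ℝ) 1 := ⟨by linarith, hs1⟩
  -- g(s) ≤ average of g
  have hgs : (s - a) * f s ^ (-(1 / r)) ≤ ∫ y in a..s, f y ^ (-(1 / r)) := by
    have e1 : ∫ y in a..s, f s ^ (-(1 / r)) ≤ ∫ y in a..s, f y ^ (-(1 / r)) := by
      apply intervalIntegral.integral_mono_on_of_le_Ioo has.le (by simp)
        (aux_ii hg ha has.le hs1.le)
      intro x hx
      have hx' : x ∈ Ico (0:ℝ) 1 := ⟨by linarith [hx.1], by linarith [hx.2]⟩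
      exact Real.rpow_le_rpow_of_nonpos (hpos x hx') (hm hx' hss hx.2.le)
        (by have : 0 < 1 / r := by positivity
            linarith)
    rwa [intervalIntegral.integral_const, smul_eq_mul] at e1
  have hFs := hFpos s has hs1.le
  have hFb := hFpos b hab hb
  have hGs := hGpos s has hs1.le
  have hGb := hGpos b hab hb
  have hfs := hpos s hss
  have hgs0 : 0 < f s ^ (-(1 / r)) := Real.rpow_pos_of_pos hfs _
  set Fs := ∫ y in a..s, f y
  set Fb := ∫ y in a..b, f y
  set Gs := ∫ y in a..s, f y ^ (-(1 / r))
  set Gb := ∫ y in a..b, f y ^ (-(1 / r))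
  have l1 := Real.log_le_log (by positivity) hgs
  rw [Real.log_mul hτ.ne' hgs0.ne', Real.log_rpow hfs] at l1
  have l2 := Real.log_nonneg hJ
  rw [Real.log_mul (by positivity) (by positivity), Real.log_rpow (by positivity),
    Real.log_mul (by positivity) hFs.ne', Real.log_mul (by positivity) hGs.ne',
    one_div (s - a), Real.log_inv] at l2
  have l3 := Real.log_le_log (by positivity) hAb
  rw [Real.log_mul (by positivity) (by positivity), Real.log_rpow (by positivity),
    Real.log_mul (by positivity) hFb.ne', Real.log_mul (by positivity) hGb.ne',
    one_div (b - a), Real.log_inv] at l3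
  rw [Real.log_mul (by positivity) hGb.ne', one_div (b - a), Real.log_inv]
  generalize Real.log Fs = x1 at *
  generalize Real.log Fb = x2 at *
  generalize Real.log Gs = x3 at *
  generalize Real.log Gb = x4 at *
  generalize Real.log (s - a) = x5 at *
  generalize Real.log (b - a) = x6 at *
  generalize Real.log M = x7 at *
  generalize -(1 / r) * Real.log (f s) = x8 at *
  have hα : r * p₁ / ((r + 1 - p₁) / r) - r = r * ((r + 1) * (p₁ - 1)) / (r + 1 - p₁) := by
    have : r + 1 - p₁ ≠ 0 := by linarith
    field_simp; ring
  have hc0 : 0 < r * p₁ / ((r + 1 - p₁) / r) - r := by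
    rw [hα]
    have := sub_pos.2 hp1
    have := sub_pos.2 hpr
    positivity
  have hrel : 1 + r * p₁ / ((r + 1 - p₁) / r) - p₁ * (r + 1)
      = (r * p₁ / ((r + 1 - p₁) / r) - r) * ((p₁ - 1) / r) := by
    have : r + 1 - p₁ ≠ 0 := by linarith
    field_simp; ring
  generalize r * p₁ / ((r + 1 - p₁) / r) = α at *
  generalize (p₁ - 1) / r = w at *
  have goal' : (α - r) * (x3 - x5) ≤ x7 + (α - r) * (x4 - x6) + (α - r) * w * (x6 - x5) := by
    rw [← hrel]
    linarith
  have : x3 - x5 ≤ x7 / (α - r) + (x4 - x6) + w * (x6 - x5) := by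
    have e : x7 / (α - r) + (x4 - x6) + w * (x6 - x5) =
      (x7 + (α - r) * (x4 - x6) + (α - r) * w * (x6 - x5)) / (α - r) := by field_simp
    rw [e, le_div_iff₀ hc0]
    linarith
  linarith

theorem aux_main {r M p₁ ρ : ℝ} (hr : 0 < r) (hp1 : 1 < p₁) (hpr : p₁ < r + 1)
    (hρ : p₁ - 1 < ρ)
    (hM : 0 < M) (hc : M * p₁ * ((r + 1 - p₁) / r) ^ r ≤ 1) {f : ℝ → ℝ} (hf : Measurable f)
    (hm : MonotoneOn f (Ico 0 1)) (hpos : ∀ x ∈ Ico (0 : ℝ) 1, 0 < f x)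
    (hA : ∀ a b : ℝ, 0 ≤ a → a < b → b ≤ 1 →
        ((1 / (b - a)) * ∫ y in a..b, f y) *
          ((1 / (b - a)) * ∫ y in a..b, f y ^ (-(1 / r))) ^ r ≤ M)
    {a b : ℝ} (ha : 0 ≤ a) (hab : a < b) (hb : b ≤ 1) :
    ((1 / (b - a)) * ∫ y in a..b, f y) *
          ((1 / (b - a)) * ∫ y in a..b, f y ^ (-(1 / ρ))) ^ ρ ≤
      M * Real.exp (r * (Real.log M / (r * p₁ / ((r + 1 - p₁) / r) - r)))
        * (1 / (1 - (p₁ - 1) / ρ)) ^ ρ := by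
  have hρ0 : 0 < ρ := by linarith
  have hg := aux_int_neg hf hm hpos (s := 1 / r) (by positivity)
  have hgρ := aux_int_neg hf hm hpos (s := 1 / ρ) (by positivity)
  have hfi := aux_int_f hr hf hm hpos hA
  have hF : 0 < ∫ y in a..b, f y :=
    intervalIntegral.intervalIntegral_pos_of_pos_on (aux_ii hfi ha hab.le hb)
      (fun x hx => hpos x ⟨by linarith [hx.1], by linarith [hx.2]⟩) hab
  have hG : 0 < ∫ y in a..b, f y ^ (-(1 / r)) :=
    intervalIntegral.intervalIntegral_pos_of_pos_on (aux_ii hg ha hab.le hb)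
      (fun x hx => Real.rpow_pos_of_pos (hpos x ⟨by linarith [hx.1], by linarith [hx.2]⟩) _) hab
  have hH : 0 < ∫ y in a..b, f y ^ (-(1 / ρ)) :=
    intervalIntegral.intervalIntegral_pos_of_pos_on (aux_ii hgρ ha hab.le hb)
      (fun x hx => Real.rpow_pos_of_pos (hpos x ⟨by linarith [hx.1], by linarith [hx.2]⟩) _) hab
  have hpt := fun s (hs : s ∈ Ioo a b) =>
    aux_pointwise hr hp1 hpr hM hc hf hm hpos hA ha hs.1 hs.2 hb
  have hAb := hA a b ha hab hb
  have hT : 0 < b - a := by linarith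
  set C := Real.log M / (r * p₁ / ((r + 1 - p₁) / r) - r)
  set θ := (p₁ - 1) / ρ with hθ
  have hθ1 : θ < 1 := by rw [hθ, div_lt_one hρ0]; exact hρ
  set B := (1 / (b - a)) * ∫ y in a..b, f y ^ (-(1 / r)) with hB
  have hB0 : 0 < B := by positivity
  set K := Real.exp (r / ρ * (C + Real.log B)) with hK
  have hK0 : 0 < K := Real.exp_pos _
  have hpt2 : ∀ s ∈ Ioo a b, f s ^ (-(1 / ρ)) ≤ K * (b - a) ^ θ * (s - a) ^ (-θ) := by
    intro s hs
    have hfs := hpos s ⟨by linarith [hs.1], by linarith [hs.2]⟩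
    have hτ : 0 < s - a := by linarith [hs.1]
    rw [← Real.log_le_log_iff (by positivity) (by positivity), Real.log_rpow hfs,
      Real.log_mul (by positivity) (by positivity), Real.log_mul (by positivity) (by positivity),
      Real.log_rpow hT, Real.log_rpow hτ, hK, Real.log_exp]
    have h := mul_le_mul_of_nonneg_left (hpt s hs) (by positivity : 0 ≤ r / ρ)
    have e1 : r / ρ * (-(1 / r) * Real.log (f s)) = -(1 / ρ) * Real.log (f s) := by field_simp
    have e2 : r / ρ * (C + Real.log B + (p₁ - 1) / r * (Real.log (b - a) - Real.log (s - a)))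
      = r / ρ * (C + Real.log B) + θ * Real.log (b - a) + -θ * Real.log (s - a) := by
      rw [hθ]; field_simp; ring
    rw [e1, e2] at h
    exact h
  have hint : IntervalIntegrable (fun s : ℝ => (s - a) ^ (-θ)) volume a b := by
    have := (intervalIntegral.intervalIntegrable_rpow' (a := 0) (b := b - a) (r := -θ)
      (by linarith)).comp_sub_right a
    simpa using this
  have hle := intervalIntegral.integral_mono_on_of_le_Ioo hab.le (aux_ii hgρ ha hab.le hb)
    (hint.const_mul (K * (b - a) ^ θ)) hpt2
  rw [intervalIntegral.integral_const_mul,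
    intervalIntegral.integral_comp_sub_right (fun s : ℝ => s ^ (-θ)) a, sub_self,
    integral_rpow (Or.inl (by linarith)), Real.zero_rpow (by linarith), sub_zero] at hle
  have hth : 0 < 1 - θ := by linarith
  have e3 : K * (b - a) ^ θ * ((b - a) ^ (-θ + 1) / (-θ + 1)) = (b - a) * (K * (1 / (1 - θ))) := by
    have : (b - a) ^ θ * (b - a) ^ (-θ + 1) = b - a := by
      rw [← Real.rpow_add hT]; simp
    rw [show -θ + 1 = 1 - θ by ring] at *
    calc _ = K * ((b - a) ^ θ * (b - a) ^ (1 - θ)) / (1 - θ) := by ring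
      _ = _ := by rw [this]; ring
  rw [e3] at hle
  have havg : (1 / (b - a)) * ∫ y in a..b, f y ^ (-(1 / ρ)) ≤ K * (1 / (1 - θ)) := by
    rw [one_div_mul_eq_div, div_le_iff₀ hT]; linarith
  have hKρ : K ^ ρ = Real.exp (r * C) * B ^ r := by
    rw [hK, ← Real.exp_mul, Real.rpow_def_of_pos hB0, ← Real.exp_add]
    congr 1
    field_simp
  calc _ ≤ ((1 / (b - a)) * ∫ y in a..b, f y) * (K * (1 / (1 - θ))) ^ ρ := by gcongr
    _ = (((1 / (b - a)) * ∫ y in a..b, f y) * B ^ r) * Real.exp (r * C) * (1 / (1 - θ)) ^ ρ := by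
      rw [Real.mul_rpow hK0.le (by positivity), hKρ]; ring
    _ ≤ _ := by gcongr

/-- **Theorem E.** Let `q > 1`, `M ≥ 1`, and let `p₀ ∈ [1,q]` be the root of
`((q−p₀)/(q−1))(M p₀)^{1/(q-1)} = 1`. For every `p ∈ (p₀, q]` there is a constant
`M' = M'(p,q,M) > 0` such that every non-decreasing `f : [0,1) → (0,∞)` satisfying the
`A_q` condition with constant `M` on every subinterval `(a,b) ⊆ [0,1)` satisfies the
`A_p` condition with constant `M'` on every such subinterval; in particular
`f^{-1/(p-1)}` is integrable on `(0,1)`. -/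
theorem muckenhoupt_Ap_from_Aq (q M p₀ p : ℝ)
    (hq : 1 < q) (hM : 1 ≤ M) (hp₀mem : p₀ ∈ Set.Icc 1 q)
    (hp₀eq : ((q - p₀) / (q - 1)) * (M * p₀) ^ (1 / (q - 1)) = 1)
    (hp : p ∈ Set.Ioc p₀ q) :
    ∃ M' : ℝ, 0 < M' ∧ ∀ f : ℝ → ℝ, Measurable f →
      MonotoneOn f (Set.Ico 0 1) →
      (∀ x ∈ Set.Ico (0 : ℝ) 1, 0 < f x) →
      (∀ a b : ℝ, 0 ≤ a → a < b → b ≤ 1 →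
        ((1 / (b - a)) * ∫ y in a..b, f y) *
          ((1 / (b - a)) * ∫ y in a..b, f y ^ (-(1 / (q - 1)))) ^ (q - 1) ≤ M) →
      (∀ a b : ℝ, 0 ≤ a → a < b → b ≤ 1 →
        ((1 / (b - a)) * ∫ y in a..b, f y) *
          ((1 / (b - a)) * ∫ y in a..b, f y ^ (-(1 / (p - 1)))) ^ (p - 1) ≤ M') ∧
      IntegrableOn (fun y => f y ^ (-(1 / (p - 1)))) (Set.Ioo 0 1) := by
  obtain ⟨h1, h2⟩ := hp₀mem
  obtain ⟨h3, h4⟩ := hp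
  have hr : 0 < q - 1 := by linarith
  have hM0 : 0 < M := by linarith
  set p₁ := (p₀ + p) / 2 with hp₁
  have hc : M * p₁ * ((q - 1 + 1 - p₁) / (q - 1)) ^ (q - 1) ≤ 1 := by
    refine aux_const hr hM h1 (by linarith) (by linarith) ?_
    rw [sub_add_cancel]
    exact hp₀eq
  have hd : 0 < 1 - (p₁ - 1) / (p - 1) := by
    rw [sub_pos, div_lt_one (by linarith)]
    linarith
  refine ⟨_, ?_, fun f hf hm hpos hA => ⟨fun a b ha hab hb =>
    aux_main (ρ := p - 1) hr (by linarith) (by linarith) (by linarith) hM0 hc hf hm hpos hA ha hab hb,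
    aux_int_neg hf hm hpos (one_div_nonneg.2 (by linarith))⟩⟩
  positivity
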